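/- Let A₁, ..., A_{d+1} ⊂ S^d be closed sets with A_i ∩ (-A_i) = ∅ for all i and ⋃_i A_i ∪ ⋃_i (-A_i) = S^d. Then for every partition of [d+1] into two disjoint (possibly empty) sets S and T, the intersection ⋂_{i∈S} A_i ∩ ⋂_{i∈T} (-A_i) is nonempty. -/

import Mathlib

open Pointwise

/-!
Hemispheres of increasing dimension are built as chains modulo 2 of arbitrarily small mesh: if `cₖ`
is a `k`-dimensional hemisphere, then `cₖ + (-cₖ)` is a cycle, and rotating it towards a new unit
vector `e` sweeps out a chain `cₖ₊₁` with `∂cₖ₊₁ = cₖ + (-cₖ)`, because the final position of the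
rotation is the constant map `e`, which kills a sum of two antipodal chains. For 0-cochains
`b₁, …, bₖ` with values in `ℤ/2` and `bᵢ(-x) = bᵢ(x) + 1`, Stokes' formula turns this into
`⟨δb₁ ∪ ⋯ ∪ δbₖ, cₖ⟩ = 1`, so some small simplex carries both values of every `bᵢ`. Taking the signs
of the coordinates of an odd map for the `bᵢ` gives the Borsuk–Ulam theorem.

Choose odd continuous functions `gᵢ` with `gᵢ = 1` exactly on `Aᵢ`. By Borsuk–Ulam the `d`
differences `gᵢ - g₁` have a common zero `x` on the sphere. Some `gⱼ(x)` is `±1` since the `±Aⱼ`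
cover, so all `gᵢ(x)` are equal to the same sign, and `x` or `-x` lies in every `Aᵢ`. Any other sign
pattern is obtained by exchanging some of the `Aᵢ` with `-Aᵢ`.
-/

/-- The augmented ordered chain complex of the full simplex on `X`, modulo 2. A list
`[x₀, …, xₖ]` stands for an ordered `k`-simplex, possibly degenerate, and `[]` for the generator in
degree `-1`. All degrees are kept in one module. -/
abbrev OrderedChain (X : Type*) := List X →₀ ZMod 2

namespace OrderedChain

variable {X Y Z : Type*}

/-- The generator of the chain module given by one ordered simplex. -/
noncomputable def simplex (l : List X) : OrderedChain X := Finsupp.single l 1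

/-- The join with a vertex, placed in front. -/
noncomputable def cone (x : X) : OrderedChain X →ₗ[ZMod 2] OrderedChain X :=
  Finsupp.lmapDomain _ _ (List.cons x)

/-- The chain map induced by a map of vertices. -/
noncomputable def map (f : X → Y) : OrderedChain X →ₗ[ZMod 2] OrderedChain Y :=
  Finsupp.lmapDomain _ _ (List.map f)

@[simp] lemma cone_simplex (x : X) (l : List X) : cone x (simplex l) = simplex (x :: l) := by
  simp [cone, simplex]

@[simp] lemma map_simplex (f : X → Y) (l : List X) : map f (simplex l) = simplex (l.map f) := by
  simp [map, simplex]

@[elab_as_elim]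
theorem induction_on {p : OrderedChain X → Prop} (c : OrderedChain X)
    (simplex : ∀ l, p (simplex l)) (add : ∀ c c', p c → p c' → p (c + c')) : p c := by
  have zero : p 0 := by
    simpa only [ZModModule.add_self] using add _ _ (simplex []) (simplex [])
  induction c using Finsupp.induction_linear with
  | zero => exact zero
  | add c c' hc hc' => exact add c c' hc hc'
  | single l a =>
    obtain rfl | rfl : a = 0 ∨ a = 1 := by decide +revert
    · rwa [Finsupp.single_zero]
    · exact simplex l

@[elab_as_elim]
theorem induction_on_cone {p : OrderedChain X → Prop} (c : OrderedChain X)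
    (nil : p (simplex [])) (cone : ∀ x c, p c → p (cone x c))
    (add : ∀ c c', p c → p c' → p (c + c')) : p c := by
  induction c using induction_on with
  | simplex l =>
    induction l with
    | nil => exact nil
    | cons x l ih => simpa only [cone_simplex] using cone x _ ih
  | add c c' hc hc' => exact add c c' hc hc'

lemma map_cone (f : X → Y) (x : X) (c : OrderedChain X) :
    map f (cone x c) = cone (f x) (map f c) := by
  simp only [map, cone, Finsupp.lmapDomain_apply, ← Finsupp.mapDomain_comp]
  rfl

lemma map_map (g : Y → Z) (f : X → Y) (c : OrderedChain X) :
    map g (map f c) = map (g ∘ f) c := by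
  simp only [map, Finsupp.lmapDomain_apply, ← Finsupp.mapDomain_comp, List.map_comp_map]

lemma map_id (c : OrderedChain X) : map id c = c := by
  simp [map]

lemma map_const_add_map (y : Y) (f : X → X) (c : OrderedChain X) :
    map (fun _ => y) (c + map f c) = 0 := by
  rw [map_add, map_map]
  exact ZModModule.add_self _

lemma map_add_map_of_involutive {f : X → X} (hf : f.Involutive) (c : OrderedChain X) :
    map f (c + map f c) = c + map f c := by
  rw [map_add, map_map, hf.comp_self, map_id, add_comm]

/-- The boundary of a single simplex, expanded along its first vertex. -/
noncomputable def simplexBoundary : List X → OrderedChain X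
  | [] => 0
  | x :: l => simplex l + cone x (simplexBoundary l)

/-- The boundary operator of the augmented complex. -/
noncomputable def boundary : OrderedChain X →ₗ[ZMod 2] OrderedChain X :=
  Finsupp.linearCombination (ZMod 2) simplexBoundary

lemma boundary_simplex (l : List X) : boundary (simplex l) = simplexBoundary l := by
  simp [boundary, simplex]

@[simp] lemma boundary_nil : boundary (simplex ([] : List X)) = 0 :=
  boundary_simplex []

lemma boundary_cone (x : X) (c : OrderedChain X) :
    boundary (cone x c) = c + cone x (boundary c) := by
  induction c using induction_on with
  | simplex l => simp only [cone_simplex, boundary_simplex, simplexBoundary]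
  | add c c' hc hc' => simp only [map_add, hc, hc']; abel

lemma boundary_boundary (c : OrderedChain X) : boundary (boundary c) = 0 := by
  induction c using induction_on_cone with
  | nil => simp
  | cone x c hc => simp [boundary_cone, hc, ZModModule.add_self]
  | add c c' hc hc' => simp [hc, hc']

lemma map_boundary (f : X → Y) (c : OrderedChain X) :
    map f (boundary c) = boundary (map f c) := by
  induction c using induction_on_cone with
  | nil => simp
  | cone x c hc => simp [boundary_cone, map_cone, hc]
  | add c c' hc hc' => simp [hc, hc']

/-- The subdivision of the prism over a single simplex whose bottom and top are its images under
`f` and `g`. -/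
noncomputable def simplexPrism (f g : X → Y) : List X → OrderedChain Y
  | [] => 0
  | x :: l => simplex (f x :: g x :: l.map g) + cone (f x) (simplexPrism f g l)

/-- The prism operator, a chain homotopy between `map f` and `map g`. -/
noncomputable def prism (f g : X → Y) : OrderedChain X →ₗ[ZMod 2] OrderedChain Y :=
  Finsupp.linearCombination (ZMod 2) (simplexPrism f g)

lemma prism_simplex (f g : X → Y) (l : List X) : prism f g (simplex l) = simplexPrism f g l := by
  simp [prism, simplex]

lemma prism_cone (f g : X → Y) (x : X) (c : OrderedChain X) :
    prism f g (cone x c) = cone (f x) (cone (g x) (map g c)) + cone (f x) (prism f g c) := by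
  induction c using induction_on with
  | simplex l => simp only [cone_simplex, map_simplex, prism_simplex, simplexPrism]
  | add c c' hc hc' => simp only [map_add, hc, hc']; abel

lemma boundary_prism (f g : X → Y) (c : OrderedChain X) :
    boundary (prism f g c) = map g c - map f c - prism f g (boundary c) := by
  simp only [ZModModule.sub_eq_add]
  induction c using induction_on_cone with
  | nil => simp [prism_simplex, simplexPrism, ZModModule.add_self]
  | cone x c hc =>
    simp only [prism_cone, map_cone, boundary_cone, map_boundary, map_add, hc]
    have := ZModModule.add_self (cone (f x) (map g c))
    grind
  | add c c' hc hc' => simp only [map_add, hc, hc']; abel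

lemma boundary_sum_prism (F : ℕ → X → Y) (n : ℕ) {z : OrderedChain X} (hz : boundary z = 0) :
    boundary (∑ j ∈ Finset.range n, prism (F j) (F (j + 1)) z) = map (F n) z - map (F 0) z := by
  simp only [map_sum, boundary_prism, hz, map_zero, sub_zero]
  exact Finset.sum_range_sub (fun j => map (F j) z) n

/-- The chains all of whose simplices belong to the family `K`. -/
noncomputable def chainsOn (K : Set (List X)) : Submodule (ZMod 2) (OrderedChain X) :=
  Submodule.span (ZMod 2) (simplex '' K)

lemma simplex_mem_chainsOn {K : Set (List X)} {l : List X} (hl : l ∈ K) :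
    simplex l ∈ chainsOn K :=
  Submodule.subset_span ⟨l, hl, rfl⟩

lemma chainsOn_le_iff {K : Set (List X)} {N : Submodule (ZMod 2) (OrderedChain X)} :
    chainsOn K ≤ N ↔ ∀ l ∈ K, simplex l ∈ N := by
  rw [chainsOn, Submodule.span_le, Set.image_subset_iff]
  rfl

lemma chainsOn_mono {K L : Set (List X)} (h : K ⊆ L) : chainsOn K ≤ chainsOn L :=
  Submodule.span_mono (Set.image_mono h)

lemma apply_eq_of_mem_chainsOn {M : Type*} [AddCommGroup M] [Module (ZMod 2) M]
    {φ ψ : OrderedChain X →ₗ[ZMod 2] M} {K : Set (List X)}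
    (h : ∀ l ∈ K, φ (simplex l) = ψ (simplex l)) {c : OrderedChain X} (hc : c ∈ chainsOn K) :
    φ c = ψ c :=
  chainsOn_le_iff (N := LinearMap.eqLocus φ ψ) |>.2 h hc

lemma map_mem_chainsOn {φ : OrderedChain X →ₗ[ZMod 2] OrderedChain Y} {K : Set (List X)}
    {L : Set (List Y)} (h : ∀ l ∈ K, φ (simplex l) ∈ chainsOn L) {c : OrderedChain X}
    (hc : c ∈ chainsOn K) : φ c ∈ chainsOn L :=
  chainsOn_le_iff (N := (chainsOn L).comap φ) |>.2 h hc

lemma simplexPrism_mem_chainsOn (f g : X → Y) (l : List X) :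
    simplexPrism f g l ∈ chainsOn {m | ∀ y ∈ m, ∃ x ∈ l, y = f x ∨ y = g x} := by
  induction l with
  | nil => exact zero_mem _
  | cons x l ih =>
    refine add_mem (simplex_mem_chainsOn ?_) (map_mem_chainsOn (fun m hm => ?_) ih)
    · simp only [Set.mem_ofPred_eq, List.mem_cons, List.mem_map]
      grind
    · rw [cone_simplex]
      refine simplex_mem_chainsOn ?_
      simp only [Set.mem_ofPred_eq, List.mem_cons] at hm ⊢
      grind

/-- The cap product with the 0-cochain `b`, evaluated on the first vertex. -/
noncomputable def cap (b : X → ZMod 2) : OrderedChain X →ₗ[ZMod 2] OrderedChain X :=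
  Finsupp.linearCombination (ZMod 2) fun l => (l.head?.elim 0 b) • simplex l

@[simp] lemma cap_nil (b : X → ZMod 2) : cap b (simplex []) = 0 := by
  simp [cap, simplex]

lemma cap_simplex_cons (b : X → ZMod 2) (x : X) (l : List X) :
    cap b (simplex (x :: l)) = b x • simplex (x :: l) := by
  simp [cap, simplex]

lemma cap_cone (b : X → ZMod 2) (x : X) (c : OrderedChain X) :
    cap b (cone x c) = b x • cone x c := by
  induction c using induction_on with
  | simplex l => rw [cone_simplex, cap_simplex_cons]
  | add c c' hc hc' => simp only [map_add, smul_add, hc, hc']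

/-- The cup product `δb₁ ∪ ⋯ ∪ δbₖ` of the coboundaries of the 0-cochains in the list. It is
obtained by rewriting `δb₁ ∪ ω` as the coboundary of `b₁ ∪ ω`, where `ω` is the product of the
remaining factors; the empty product is the augmentation. -/
noncomputable def crossing : List (X → ZMod 2) → OrderedChain X →ₗ[ZMod 2] ZMod 2
  | [] => Finsupp.lapply [] ∘ₗ boundary
  | b :: bs => crossing bs ∘ₗ cap b ∘ₗ boundary

lemma crossing_cons (b : X → ZMod 2) (bs : List (X → ZMod 2)) (c : OrderedChain X) :
    crossing (b :: bs) c = crossing bs (cap b (boundary c)) :=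
  rfl

lemma crossing_boundary (bs : List (X → ZMod 2)) (c : OrderedChain X) :
    crossing bs (boundary c) = 0 := by
  cases bs <;> simp [crossing, boundary_boundary]

@[simp] lemma crossing_simplex_nil (bs : List (X → ZMod 2)) : crossing bs (simplex []) = 0 := by
  cases bs <;> simp [crossing]

lemma crossing_nil_cons (x : X) (l : List X) :
    crossing [] (simplex (x :: l)) = simplex l [] := by
  have cone_apply_nil : cone x (boundary (simplex l)) [] = 0 :=
    Finsupp.mapDomain_of_notMem_range _ _ (by simp)
  change boundary (simplex (x :: l)) [] = _
  rw [← cone_simplex, boundary_cone, Finsupp.add_apply, cone_apply_nil, add_zero]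

lemma crossing_cons_singleton (b : X → ZMod 2) (bs : List (X → ZMod 2)) (x : X) :
    crossing (b :: bs) (simplex [x]) = 0 := by
  simp [crossing_cons, boundary_simplex, simplexBoundary]

lemma crossing_cons_cons_cons (b : X → ZMod 2) (bs : List (X → ZMod 2)) (x y : X) (l : List X) :
    crossing (b :: bs) (simplex (x :: y :: l)) = (b x + b y) * crossing bs (simplex (y :: l)) := by
  set c := simplex (y :: l) with hc
  -- `⟨bs, ·⟩` is a cocycle, so the faces through `x` together weigh as much as the opposite face.
  have faces_sum : crossing bs (cone x (boundary c)) = crossing bs c := by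
    have := crossing_boundary bs (cone x c)
    rwa [boundary_cone, map_add, ← ZModModule.sub_eq_add, sub_eq_zero, eq_comm] at this
  calc crossing (b :: bs) (simplex (x :: y :: l))
      = crossing bs (cap b c + cap b (cone x (boundary c))) := by
        rw [crossing_cons, ← cone_simplex, boundary_cone, map_add]
    _ = b y * crossing bs c + b x * crossing bs (cone x (boundary c)) := by
        rw [cap_cone, hc, cap_simplex_cons, map_add, map_smul, map_smul, smul_eq_mul, smul_eq_mul]
    _ = (b x + b y) * crossing bs c := by rw [faces_sum]; ring

lemma exists_ne_of_crossing_simplex_ne_zero {bs : List (X → ZMod 2)} {l : List X}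
    (h : crossing bs (simplex l) ≠ 0) : ∀ b ∈ bs, ∃ x ∈ l, ∃ y ∈ l, b x ≠ b y := by
  induction bs generalizing l with
  | nil => simp
  | cons b bs ih =>
    match l with
    | [] => simp at h
    | [x] => exact absurd (crossing_cons_singleton b bs x) h
    | x :: y :: l =>
      rw [crossing_cons_cons_cons] at h
      obtain ⟨hb, hbs⟩ := mul_ne_zero_iff.1 h
      refine List.forall_mem_cons.2 ⟨⟨x, by simp, y, by simp, fun hxy => hb ?_⟩, fun b' hb' => ?_⟩
      · rw [hxy, CharTwo.add_self_eq_zero]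
      · obtain ⟨u, hu, v, hv, huv⟩ := ih hbs b' hb'
        exact ⟨u, List.mem_cons_of_mem x hu, v, List.mem_cons_of_mem x hv, huv⟩

lemma crossing_simplex_map {f : X → X} {bs : List (X → ZMod 2)} {l : List X}
    (hf : ∀ b ∈ bs, ∀ x ∈ l, b (f x) = b x + 1) :
    crossing bs (simplex (l.map f)) = crossing bs (simplex l) := by
  induction bs generalizing l with
  | nil =>
    cases l with
    | nil => rfl
    | cons x l =>
      rw [List.map_cons, crossing_nil_cons, crossing_nil_cons]
      simp [simplex, Finsupp.single_apply]
  | cons b bs ih =>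
    match l with
    | [] => rfl
    | [x] => rw [List.map_singleton, crossing_cons_singleton, crossing_cons_singleton]
    | x :: y :: l =>
      have ih' : crossing bs (simplex (f y :: l.map f)) = crossing bs (simplex (y :: l)) :=
        ih fun b' hb' u hu => hf b' (List.mem_cons_of_mem b hb') u (List.mem_cons_of_mem x hu)
      rw [List.map_cons, List.map_cons, crossing_cons_cons_cons, crossing_cons_cons_cons, ih',
        hf b (by simp) x (by simp), hf b (by simp) y (by simp), add_add_add_comm,
        CharTwo.add_self_eq_zero, add_zero]

lemma crossing_cap_add_map {f : X → X} {b : X → ZMod 2} {bs : List (X → ZMod 2)} {s : Set X}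
    (hf : ∀ b' ∈ b :: bs, ∀ x ∈ s, b' (f x) = b' x + 1) {c : OrderedChain X}
    (hc : c ∈ chainsOn {l | ∀ x ∈ l, x ∈ s}) :
    crossing bs (cap b (c + map f c)) = crossing bs c := by
  suffices ∀ l ∈ {l | ∀ x ∈ l, x ∈ s},
      (crossing bs ∘ₗ cap b ∘ₗ (LinearMap.id + map f)) (simplex l) = crossing bs (simplex l) from
    apply_eq_of_mem_chainsOn this hc
  intro l hl
  rcases l with _ | ⟨x, l⟩
  · simp
  have hmap : crossing bs (simplex (f x :: l.map f)) = crossing bs (simplex (x :: l)) :=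
    crossing_simplex_map fun b' hb' u hu => hf b' (List.mem_cons_of_mem b hb') u (hl u hu)
  calc crossing bs (cap b (simplex (x :: l) + map f (simplex (x :: l))))
      = b x * crossing bs (simplex (x :: l)) + b (f x) * crossing bs (simplex (x :: l)) := by
        rw [map_add, map_add, map_simplex, List.map_cons, cap_simplex_cons, cap_simplex_cons,
          map_smul, map_smul, hmap, smul_eq_mul, smul_eq_mul]
    _ = (b x + b x) * crossing bs (simplex (x :: l)) + crossing bs (simplex (x :: l)) := by
        rw [hf b (by simp) x (hl x (by simp))]; ring
    _ = crossing bs (simplex (x :: l)) := by rw [CharTwo.add_self_eq_zero, zero_mul, zero_add]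

end OrderedChain

section NormedSpace

variable {E : Type*} [NormedAddCommGroup E] [NormedSpace ℝ E]

/-- Rotation by the angle `t` towards the unit vector `e`. It is meant for vectors `x` orthogonal to
`e` in an inner product space, and is not a rotation on other vectors. -/
noncomputable def rotate (e : E) (t : ℝ) (x : E) : E := Real.cos t • x + Real.sin t • e

lemma dist_rotate_le {e x : E} (he : ‖e‖ = 1) (hx : ‖x‖ = 1) (y : E) (s t : ℝ) :
    dist (rotate e s x) (rotate e t y) ≤ dist x y + 2 * |s - t| := by
  have hsplit : rotate e s x - rotate e t y = (Real.cos s - Real.cos t) • x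
      + Real.cos t • (x - y) + (Real.sin s - Real.sin t) • e := by
    simp only [rotate]; module
  calc dist (rotate e s x) (rotate e t y)
      ≤ ‖(Real.cos s - Real.cos t) • x‖ + ‖Real.cos t • (x - y)‖
          + ‖(Real.sin s - Real.sin t) • e‖ := by
        rw [dist_eq_norm, hsplit]; exact norm_add₃_le
    _ = |Real.cos s - Real.cos t| + |Real.cos t| * dist x y + |Real.sin s - Real.sin t| := by
        simp [norm_smul, he, hx, dist_eq_norm]
    _ ≤ |s - t| + 1 * dist x y + |s - t| :=
        add_le_add_three (Real.abs_cos_sub_cos_le s t)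
          (mul_le_mul_of_nonneg_right (Real.abs_cos_le_one t) dist_nonneg)
          (Real.abs_sin_sub_sin_le s t)
    _ = dist x y + 2 * |s - t| := by ring

/-- The ordered simplices, of mesh less than `ε`, with vertices on the unit sphere of `W`. -/
def smallSimplices (W : Submodule ℝ E) (ε : ℝ) : Set (List E) :=
  {l | (∀ x ∈ l, x ∈ W ∧ ‖x‖ = 1) ∧ ∀ x ∈ l, ∀ y ∈ l, dist x y < ε}

lemma map_neg_mem_smallSimplices {W : Submodule ℝ E} {ε : ℝ} {l : List E}
    (hl : l ∈ smallSimplices W ε) : l.map (- ·) ∈ smallSimplices W ε := by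
  simpa only [smallSimplices, Set.mem_ofPred_eq, List.forall_mem_map, neg_mem_iff, norm_neg,
    dist_neg_neg] using hl

lemma exists_mem_norm_eq_one {W : Submodule ℝ E} (hW : 0 < Module.finrank ℝ W) :
    ∃ x ∈ W, ‖x‖ = 1 := by
  have : Nontrivial W := Module.nontrivial_of_finrank_pos hW
  obtain ⟨x, hx⟩ := exists_norm_eq W zero_le_one
  exact ⟨x, x.2, hx⟩

end NormedSpace

lemma exists_mod_two_sign {X : Type*} [InvolutiveNeg X] (h : X → ℝ) :
    ∃ b : X → ZMod 2, (∀ x, -x ≠ x → h (-x) = -h x → b (-x) = b x + 1) ∧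
      ∀ x y, b x ≠ b y → h x * h y ≤ 0 := by
  classical
  -- The well-order breaks the ties between antipodal zeros of `h`.
  refine ⟨fun x => if 0 < h x ∨ h x = 0 ∧ WellOrderingRel x (-x) then 1 else 0,
    fun x hx hneg => ?_, fun x y hxy => ?_⟩
  · have hasymm : WellOrderingRel (-x) x ↔ ¬ WellOrderingRel x (-x) :=
      ⟨fun h₁ h₂ => asymm h₁ h₂, fun h₁ =>
        ((trichotomous_of WellOrderingRel x (-x)).resolve_left h₁).resolve_left hx.symm⟩
    rcases lt_trichotomy (h x) 0 with h0 | h0 | h0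
    · simp [hneg, h0, h0.ne, h0.not_gt]
    · by_cases hr : WellOrderingRel x (-x) <;> simp [hneg, h0, hasymm, hr, CharTwo.add_self_eq_zero]
    · simp [hneg, h0, h0.ne', h0.not_gt, CharTwo.add_self_eq_zero]
  · by_contra! hpos
    rcases mul_pos_iff.1 hpos with ⟨hx, hy⟩ | ⟨hx, hy⟩
    · simp [hx, hy] at hxy
    · simp [hx.not_gt, hy.not_gt, hx.ne, hy.ne] at hxy

section InnerProductSpace

variable {E : Type*} [NormedAddCommGroup E] [InnerProductSpace ℝ E]

open OrderedChain

lemma norm_rotate {e x : E} (he : ‖e‖ = 1) (hx : ‖x‖ = 1) (hxe : inner ℝ e x = 0) (t : ℝ) :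
    ‖rotate e t x‖ = 1 := by
  have hsq : ‖rotate e t x‖ ^ 2 = 1 := by
    rw [rotate, norm_add_sq_real, inner_smul_left, inner_smul_right, real_inner_comm, hxe,
      norm_smul, norm_smul, he, hx]
    simp
  exact (sq_eq_sq₀ (norm_nonneg _) zero_le_one).1 (by rw [hsq, one_pow])

lemma simplexPrism_rotate_mem_chainsOn {W : Submodule ℝ E} {e : E} (heW : e ∈ W) (he : ‖e‖ = 1)
    {ε : ℝ} {s t : ℝ} (hst : 2 * |s - t| ≤ ε / 2) {l : List E}
    (hl : l ∈ smallSimplices (W ⊓ (ℝ ∙ e)ᗮ) (ε / 2)) :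
    simplexPrism (rotate e s) (rotate e t) l ∈ chainsOn (smallSimplices W ε) := by
  refine chainsOn_mono ?_ (simplexPrism_mem_chainsOn (rotate e s) (rotate e t) l)
  intro m hm
  have exists_rotate : ∀ y ∈ m, ∃ x ∈ l, ∃ r, (r = s ∨ r = t) ∧ y = rotate e r x := by
    intro y hy
    obtain ⟨x, hx, rfl | rfl⟩ := hm y hy
    exacts [⟨x, hx, s, .inl rfl, rfl⟩, ⟨x, hx, t, .inr rfl, rfl⟩]
  constructor
  · intro y hy
    obtain ⟨x, hx, r, -, rfl⟩ := exists_rotate y hy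
    obtain ⟨⟨hxW, hxe⟩, hx1⟩ := hl.1 x hx
    exact ⟨W.add_mem (W.smul_mem _ hxW) (W.smul_mem _ heW),
      norm_rotate he hx1 (Submodule.mem_orthogonal_singleton_iff_inner_right.1 hxe) r⟩
  · intro y hy y' hy'
    obtain ⟨x, hx, r, hr, rfl⟩ := exists_rotate y hy
    obtain ⟨x', hx', r', hr', rfl⟩ := exists_rotate y' hy'
    have hrr' : |r - r'| ≤ |s - t| := by
      rcases hr with rfl | rfl <;> rcases hr' with rfl | rfl <;> simp [abs_sub_comm]
    linarith [dist_rotate_le he (hl.1 x hx).2 x' r r', hl.2 x hx x' hx']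

theorem exists_boundary_eq_map_const_sub {W : Submodule ℝ E} {e : E} (heW : e ∈ W)
    (he : ‖e‖ = 1) {ε : ℝ} (hε : 0 < ε) {z : OrderedChain E}
    (hz : z ∈ chainsOn (smallSimplices (W ⊓ (ℝ ∙ e)ᗮ) (ε / 2))) (hz0 : boundary z = 0) :
    ∃ c ∈ chainsOn (smallSimplices W ε), boundary c = map (fun _ => e) z - z := by
  obtain ⟨n, hn⟩ := exists_nat_gt (2 * Real.pi / ε)
  have hn0 : (0 : ℝ) < n := lt_trans (by positivity) hn
  set τ := Real.pi / 2 / n with hτ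
  have hτε : 2 * τ ≤ ε / 2 := by
    rw [div_lt_iff₀ hε] at hn
    rw [hτ, div_div, mul_div_assoc', div_le_iff₀ (by positivity)]
    linarith
  have rotate_zero : rotate e 0 = id := by ext; simp [rotate]
  have rotate_last : rotate e (n * τ) = fun _ => e := by
    ext; simp [rotate, hτ, mul_div_cancel₀ _ hn0.ne']
  refine ⟨∑ j ∈ Finset.range n, prism (rotate e (j * τ)) (rotate e ((j + 1 : ℕ) * τ)) z,
    Submodule.sum_mem _ fun j _ => ?_, ?_⟩
  · refine map_mem_chainsOn (fun l hl => ?_) hz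
    rw [prism_simplex]
    refine simplexPrism_rotate_mem_chainsOn heW he ?_ hl
    have : (j : ℝ) * τ - (j + 1 : ℕ) * τ = -τ := by push_cast; ring
    rwa [this, abs_neg, abs_of_nonneg (by positivity)]
  · rw [boundary_sum_prism (fun j => rotate e (j * τ)) n hz0, rotate_last, Nat.cast_zero, zero_mul,
      rotate_zero, map_id]

lemma finrank_inf_orthogonal_singleton_add_one {W : Submodule ℝ E}
    (hW : 0 < Module.finrank ℝ W) {e : E} (heW : e ∈ W) (he : e ≠ 0) :
    Module.finrank ℝ (W ⊓ (ℝ ∙ e)ᗮ : Submodule ℝ E) + 1 = Module.finrank ℝ W := by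
  have : FiniteDimensional ℝ W := FiniteDimensional.of_finrank_pos hW
  have := Submodule.finrank_add_inf_finrank_orthogonal
    ((Submodule.span_singleton_le_iff_mem e W).2 heW)
  rw [finrank_span_singleton he] at this
  rw [inf_comm]
  omega

theorem exists_hemisphere (bs : List (E → ZMod 2)) {W : Submodule ℝ E}
    (hW : bs.length < Module.finrank ℝ W)
    (hbs : ∀ b ∈ bs, ∀ x, ‖x‖ = 1 → b (-x) = b x + 1) {ε : ℝ} (hε : 0 < ε) :
    ∃ c ∈ chainsOn (smallSimplices W ε), boundary (c + map (- ·) c) = 0 ∧ crossing bs c = 1 := by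
  induction bs generalizing W ε with
  | nil =>
    obtain ⟨x, hxW, hx⟩ := exists_mem_norm_eq_one hW
    refine ⟨simplex [x], simplex_mem_chainsOn ?_, ?_, ?_⟩
    · simp [smallSimplices, hxW, hx, hε]
    · simp [boundary_simplex, simplexBoundary, ZModModule.add_self]
    · rw [crossing_nil_cons, simplex, Finsupp.single_eq_same]
  | cons b bs ih =>
    obtain ⟨e, heW, he⟩ := exists_mem_norm_eq_one (Nat.zero_lt_of_lt hW)
    have hrank := finrank_inf_orthogonal_singleton_add_one (Nat.zero_lt_of_lt hW) heW
      (norm_ne_zero_iff.1 (he ▸ one_ne_zero))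
    rw [List.length_cons] at hW
    obtain ⟨c, hc, hc0, hc1⟩ := ih (W := W ⊓ (ℝ ∙ e)ᗮ) (by omega)
      (fun b' hb' => hbs b' (List.mem_cons_of_mem b hb')) (half_pos hε)
    have hz : c + map (- ·) c ∈ chainsOn (smallSimplices (W ⊓ (ℝ ∙ e)ᗮ) (ε / 2)) := by
      refine add_mem hc (map_mem_chainsOn (fun l hl => ?_) hc)
      rw [map_simplex]
      exact simplex_mem_chainsOn (map_neg_mem_smallSimplices hl)
    obtain ⟨c', hc', hbc'⟩ := exists_boundary_eq_map_const_sub heW he hε hz hc0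
    rw [map_const_add_map, ZModModule.sub_eq_add, zero_add] at hbc'
    refine ⟨c', hc', ?_, ?_⟩
    · rw [map_add, ← map_boundary, hbc', map_add_map_of_involutive neg_involutive,
        ZModModule.add_self]
    · rw [crossing_cons, hbc', crossing_cap_add_map (s := {x | ‖x‖ = 1}) hbs, hc1]
      exact chainsOn_mono (fun l hl x hx => (hl.1 x hx).2) hc

theorem exists_small_simplex_forall_exists_ne {bs : List (E → ZMod 2)}
    (hE : bs.length < Module.finrank ℝ E)
    (hbs : ∀ b ∈ bs, ∀ x, ‖x‖ = 1 → b (-x) = b x + 1) {ε : ℝ} (hε : 0 < ε) :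
    ∃ l ∈ smallSimplices (⊤ : Submodule ℝ E) ε, l ≠ [] ∧
      ∀ b ∈ bs, ∃ x ∈ l, ∃ y ∈ l, b x ≠ b y := by
  obtain ⟨c, hc, -, hc1⟩ := exists_hemisphere bs (W := ⊤) (by rwa [finrank_top]) hbs hε
  obtain ⟨l, hl, hl1⟩ :
      ∃ l ∈ smallSimplices (⊤ : Submodule ℝ E) ε, crossing bs (simplex l) ≠ 0 := by
    by_contra! h
    exact one_ne_zero (hc1.symm.trans (apply_eq_of_mem_chainsOn (ψ := 0) h hc))
  refine ⟨l, hl, ?_, exists_ne_of_crossing_simplex_ne_zero hl1⟩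
  rintro rfl
  exact hl1 (crossing_simplex_nil bs)

theorem exists_mem_sphere_norm_lt_of_odd {ι : Type*} [Fintype ι]
    (hι : Fintype.card ι < Module.finrank ℝ E) {f : E → ι → ℝ}
    (hf : UniformContinuousOn f (Metric.sphere 0 1))
    (hodd : ∀ x ∈ Metric.sphere 0 1, f (-x) = -f x) {η : ℝ} (hη : 0 < η) :
    ∃ x ∈ Metric.sphere (0 : E) 1, ‖f x‖ < η := by
  obtain ⟨δ, hδ, hfδ⟩ := Metric.uniformContinuousOn_iff.1 hf η hη
  choose b hb_neg hb_sign using fun i => exists_mod_two_sign (f · i)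
  have hb_odd : ∀ i ∈ Finset.univ.toList, ∀ x, ‖x‖ = 1 → b i (-x) = b i x + 1 := by
    intro i _ x hx
    rw [← mem_sphere_zero_iff_norm] at hx
    exact hb_neg i x (fun h => ne_neg_of_mem_unit_sphere ℝ ⟨x, hx⟩ (Subtype.ext h.symm))
      (congr_fun (hodd x hx) i)
  obtain ⟨l, ⟨hl1, hlδ⟩, hl0, hl⟩ := exists_small_simplex_forall_exists_ne
    (bs := Finset.univ.toList.map b) (by simpa using hι) (List.forall_mem_map.2 hb_odd) hδ
  have mem_sphere : ∀ y ∈ l, y ∈ Metric.sphere (0 : E) 1 := fun y hy =>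
    mem_sphere_zero_iff_norm.2 (hl1 y hy).2
  obtain ⟨x, hx⟩ := List.exists_mem_of_ne_nil l hl0
  refine ⟨x, mem_sphere x hx, (pi_norm_lt_iff hη).2 fun i => ?_⟩
  obtain ⟨y, hy, hxy⟩ : ∃ y ∈ l, b i x ≠ b i y := by
    obtain ⟨u, hu, v, hv, huv⟩ := hl (b i) (by simp)
    by_contra! h
    exact huv ((h u hu).symm.trans (h v hv))
  calc ‖f x i‖ ≤ ‖f x i - f y i‖ := sq_le_sq.1 (by nlinarith [hb_sign i x y hxy])
    _ ≤ ‖f x - f y‖ := norm_le_pi_norm (f x - f y) i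
    _ < η := by
      rw [← dist_eq_norm]
      exact hfδ x (mem_sphere x hx) y (mem_sphere y hy) (hlδ x hx y hy)

theorem borsuk_ulam {ι : Type*} [Fintype ι] (hι : Fintype.card ι < Module.finrank ℝ E)
    {f : E → ι → ℝ} (hf : ContinuousOn f (Metric.sphere 0 1))
    (hodd : ∀ x ∈ Metric.sphere 0 1, f (-x) = -f x) :
    ∃ x ∈ Metric.sphere (0 : E) 1, f x = 0 := by
  have hE : 0 < Module.finrank ℝ E := Nat.zero_lt_of_lt hι
  have : FiniteDimensional ℝ E := FiniteDimensional.of_finrank_pos hE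
  have : Nontrivial E := Module.nontrivial_of_finrank_pos hE
  have : ProperSpace E := FiniteDimensional.proper_real E
  have hK : IsCompact (Metric.sphere (0 : E) 1) := isCompact_sphere 0 1
  obtain ⟨x₀, hx₀, hmin⟩ :=
    hK.exists_isMinOn (NormedSpace.sphere_nonempty.2 zero_le_one) hf.norm
  refine ⟨x₀, hx₀, by_contra fun hne => ?_⟩
  obtain ⟨x, hx, hlt⟩ := exists_mem_sphere_norm_lt_of_odd hι
    (hK.uniformContinuousOn_of_continuous hf) hodd (norm_pos_iff.2 hne)
  exact hlt.not_ge (hmin hx)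

end InnerProductSpace

section Separation

open Metric

lemma exists_continuous_odd_eq_one_iff {E : Type*} [SeminormedAddCommGroup E] {A : Set E}
    (hA : IsClosed A) (hdisj : A ∩ -A = ∅) :
    ∃ g : E → ℝ, Continuous g ∧ (∀ x, g (-x) = -g x) ∧ ∀ x, g x = 1 ↔ x ∈ A := by
  rcases A.eq_empty_or_nonempty with rfl | hne
  · exact ⟨0, continuous_zero, by simp, by simp⟩
  have infDist_pos_add : ∀ x, 0 < infDist x (-A) + infDist x A := by
    intro x
    refine (add_nonneg infDist_nonneg infDist_nonneg).lt_of_ne' fun h => ?_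
    obtain ⟨hneg, hpos⟩ := (add_eq_zero_iff_of_nonneg infDist_nonneg infDist_nonneg).1 h
    exact Set.eq_empty_iff_forall_notMem.1 hdisj x
      ⟨(hA.mem_iff_infDist_zero hne).2 hpos, (hA.neg.mem_iff_infDist_zero hne.neg).2 hneg⟩
  have infDist_neg_right : ∀ x, infDist x (-A) = infDist (-x) A := by
    intro x
    rw [← infDist_image isometry_neg, Set.image_neg_eq_neg, neg_neg]
  refine ⟨fun x => (infDist x (-A) - infDist x A) / (infDist x (-A) + infDist x A), ?_, ?_, ?_⟩
  · exact ((continuous_infDist_pt _).sub (continuous_infDist_pt _)).div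
      ((continuous_infDist_pt _).add (continuous_infDist_pt _)) fun x => (infDist_pos_add x).ne'
  · intro x
    simp only [infDist_neg_right, neg_neg]
    rw [← neg_div, neg_sub, add_comm (infDist x A)]
  · intro x
    rw [div_eq_one_iff_eq (infDist_pos_add x).ne', hA.mem_iff_infDist_zero hne]
    constructor <;> intro h <;> linarith

variable {E : Type*} [NormedAddCommGroup E] [InnerProductSpace ℝ E]
  {ι : Type*} [Fintype ι] [Nonempty ι]

theorem exists_mem_sphere_forall_mem_of_antipodal_cover
    (hι : Fintype.card ι ≤ Module.finrank ℝ E) {A : ι → Set E} (hclosed : ∀ i, IsClosed (A i))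
    (hdisj : ∀ i, A i ∩ -A i = ∅) (hcover : sphere 0 1 ⊆ ⋃ i, (A i ∪ -A i)) :
    ∃ x ∈ sphere 0 1, ∀ i, x ∈ A i := by
  classical
  choose g hg hg_neg hg_one using fun i => exists_continuous_odd_eq_one_iff (hclosed i) (hdisj i)
  obtain ⟨i₀⟩ := ‹Nonempty ι›
  obtain ⟨x, hx, hgx⟩ := borsuk_ulam (ι := {i // i ≠ i₀})
    ((Fintype.card_subtype_lt (x := i₀) (by simp)).trans_le hι) (f := fun x i => g i x - g i₀ x)
    (by fun_prop) (fun x _ => by ext i; simp only [hg_neg, Pi.neg_apply]; ring)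
  have g_eq : ∀ i, g i x = g i₀ x := by
    intro i
    by_cases hi : i = i₀
    · rw [hi]
    · exact sub_eq_zero.1 (congr_fun hgx ⟨i, hi⟩)
  obtain ⟨j, hj | hj⟩ := Set.mem_iUnion.1 (hcover hx)
  · refine ⟨x, hx, fun i => (hg_one i x).1 ?_⟩
    rw [g_eq i, ← g_eq j, (hg_one j x).2 hj]
  · refine ⟨-x, by simpa using hx, fun i => (hg_one i (-x)).1 ?_⟩
    rw [hg_neg, g_eq i, ← g_eq j, ← hg_neg, (hg_one j (-x)).2 hj]

theorem stmt4_general [DecidableEq ι] (hι : Fintype.card ι ≤ Module.finrank ℝ E) (A : ι → Set E)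
    (hclosed : ∀ i, IsClosed (A i)) (hdisj : ∀ i, A i ∩ -A i = ∅)
    (hcover : sphere 0 1 ⊆ ⋃ i, (A i ∪ -A i)) (S : Finset ι) :
    (sphere 0 1 ∩ ((⋂ i ∈ S, A i) ∩ ⋂ i ∈ Sᶜ, -A i)).Nonempty := by
  obtain ⟨x, hx, hxA⟩ := exists_mem_sphere_forall_mem_of_antipodal_cover hι
    (A := fun i => if i ∈ S then A i else -A i)
    (fun i => by split_ifs; exacts [hclosed i, (hclosed i).neg])
    (fun i => by split_ifs; exacts [hdisj i, by rw [neg_neg, Set.inter_comm, hdisj i]])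
    (hcover.trans (Set.iUnion_mono fun i => by
      split_ifs; exacts [subset_rfl, by rw [neg_neg, Set.union_comm]]))
  refine ⟨x, hx, Set.mem_iInter₂.2 fun i hi => ?_, Set.mem_iInter₂.2 fun i hi => ?_⟩
  · simpa only [if_pos hi] using hxA i
  · simpa only [if_neg (Finset.mem_compl.1 hi)] using hxA i

end Separation

/-- For closed sets `A₁,…,A_{d+1} ⊆ S^d` with `A_i ∩ (-A_i) = ∅` that together with their
antipodes cover `S^d`, every prescribed sign pattern yields a nonempty intersection:
for every partition `S ⊔ Sᶜ` of `[d+1]`, `⋂_{i∈S} A_i ∩ ⋂_{i∈Sᶜ} (-A_i) ≠ ∅`. -/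
theorem stmt4 (d : ℕ)
    (A : Fin (d + 1) → Set (EuclideanSpace ℝ (Fin (d + 1))))
    (hclosed : ∀ i, IsClosed (A i))
    (hsub : ∀ i, A i ⊆ Metric.sphere (0 : EuclideanSpace ℝ (Fin (d + 1))) 1)
    (hdisj : ∀ i, A i ∩ (-A i) = ∅)
    (hcover : Metric.sphere (0 : EuclideanSpace ℝ (Fin (d + 1))) 1 ⊆ ⋃ i, (A i ∪ -A i)) :
    ∀ S : Finset (Fin (d + 1)),
      ((⋂ i ∈ S, A i) ∩ ⋂ i ∈ Sᶜ, -A i).Nonempty :=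
  fun S => (stmt4_general (by simp) A hclosed hdisj hcover S).mono Set.inter_subset_right
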